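/- Let m > n ≥ 3, π := π_{n,m}, and let S_m = {x ∈ ℝᵐ : x ≥ 0, Σᵢ xᵢ ≤ 1} be the standard simplex. Then P_n := π(S_m) is a full-dimensional polytope in ℝⁿ with exactly n+2 facets and exactly n+2 vertices, and for every irredundant description of P_n: C(P_n) ⊄ π(C(S_m)), and C(P_n) ∩ π(C(S_m)) equals exactly the set of edge directions of P_n. -/

import Mathlib

open Matrix

noncomputable section

/-- The polyhedron `{x : Ax = b, Bx ≤ d}`. -/
def polySet {p q n : Type*} [Fintype n] (A : Matrix p n ℝ) (b : p → ℝ)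
    (B : Matrix q n ℝ) (d : q → ℝ) : Set (n → ℝ) :=
  {x | A.mulVec x = b ∧ B.mulVec x ≤ d}

/-- The circuits of the linear description `Ax = b, Bx ≤ d`: nonzero kernel elements `g` of `A`
whose support of `Bg` is inclusion-minimal among nonzero kernel elements. -/
def circuits {p q n : Type*} [Fintype n] (A : Matrix p n ℝ) (B : Matrix q n ℝ) :
    Set (n → ℝ) :=
  {g | A.mulVec g = 0 ∧ g ≠ 0 ∧
    ∀ y : n → ℝ, A.mulVec y = 0 → y ≠ 0 →
      {i | B.mulVec y i ≠ 0} ⊆ {i | B.mulVec g i ≠ 0} →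
      {i | B.mulVec g i ≠ 0} ⊆ {i | B.mulVec y i ≠ 0}}

/-- A face of a polyhedron `P`: either `P` itself or the set of maximizers of a linear
functional over `P` whose supremum is finite and attained. -/
def IsFace {n : Type*} [Fintype n] (P F : Set (n → ℝ)) : Prop :=
  F = P ∨ ∃ (c : n → ℝ) (s : ℝ),
    (∀ y ∈ P, c ⬝ᵥ y ≤ s) ∧ (∃ y ∈ P, c ⬝ᵥ y = s) ∧ F = {x ∈ P | c ⬝ᵥ x = s}

/-- The dimension of the affine span of a set. -/
def spanDim {n : Type*} [Fintype n] (S : Set (n → ℝ)) : ℕ :=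
  Module.finrank ℝ (affineSpan ℝ S).direction

def IsVertex {n : Type*} [Fintype n] (P : Set (n → ℝ)) (v : n → ℝ) : Prop :=
  IsFace P {v}

def IsEdge {n : Type*} [Fintype n] (P F : Set (n → ℝ)) : Prop :=
  IsFace P F ∧ spanDim F = 1

/-- A nonzero vector lying in the direction space of the affine span of some edge of `P`. -/
def IsEdgeDirection {n : Type*} [Fintype n] (P : Set (n → ℝ)) (g : n → ℝ) : Prop :=
  g ≠ 0 ∧ ∃ F, IsEdge P F ∧ g ∈ (affineSpan ℝ F).direction

/-- A facet: a face whose affine span has dimension `dim P - 1`. -/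
def IsFacet {n : Type*} [Fintype n] (P F : Set (n → ℝ)) : Prop :=
  IsFace P F ∧ spanDim F + 1 = spanDim P

/-- A pointed set: contains no affine line. -/
def PointedSet {n : Type*} [Fintype n] (P : Set (n → ℝ)) : Prop :=
  ∀ x v : n → ℝ, (∀ t : ℝ, x + t • v ∈ P) → v = 0

/-- `Ax = b, Bx ≤ d` is an irredundant description of `P`. -/
def Irredundant {p q n : Type*} [Fintype n] (A : Matrix p n ℝ) (b : p → ℝ)
    (B : Matrix q n ℝ) (d : q → ℝ) (P : Set (n → ℝ)) : Prop :=
  P = polySet A b B d ∧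
  {x | A.mulVec x = b} = (affineSpan ℝ P : Set (n → ℝ)) ∧
  ∀ i, IsFacet P {x ∈ P | B.mulVec x i = d i}

/-- A basic solution of the system `Ax = b, Bx ≤ d`: satisfies the equalities, and the rows of
`A` together with the tight rows of `B` span the whole space. -/
def IsBasicSolution {p q n : Type*} [Fintype n] (A : Matrix p n ℝ) (b : p → ℝ)
    (B : Matrix q n ℝ) (d : q → ℝ) (g : n → ℝ) : Prop :=
  A.mulVec g = b ∧
  Submodule.span ℝ (Set.range (fun i => A i) ∪
    (fun i => B i) '' {i | B.mulVec g i = d i}) = ⊤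

/-- The matrix `Π_{n,m}` (0-indexed): columns `2e₀, e₀+e₂, 2e₁, e₁+e₂, 2e₃, …, 2e_{n-1}, 0, …`. -/
def piMat (n m : ℕ) : Matrix (Fin n) (Fin m) ℝ :=
  Matrix.of fun i j =>
    if j.val = 0 then (if i.val = 0 then 2 else 0)
    else if j.val = 1 then (if i.val = 0 ∨ i.val = 2 then 1 else 0)
    else if j.val = 2 then (if i.val = 1 then 2 else 0)
    else if j.val = 3 then (if i.val = 1 ∨ i.val = 2 then 1 else 0)
    else if j.val ≤ n then (if i.val + 1 = j.val then 2 else 0)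
    else 0

/-- The inequality matrix of the description `-x ≤ 0, Σᵢ xᵢ ≤ 1` of the standard simplex. -/
def simplexB (m : ℕ) : Matrix (Fin (m+1)) (Fin m) ℝ :=
  Matrix.of fun i j =>
    if i.val < m then (if j.val = i.val then -1 else 0) else 1

def simplexd (m : ℕ) : Fin (m+1) → ℝ := fun i => if i.val < m then 0 else 1

/-- The standard simplex `S_m = {x : x ≥ 0, Σᵢ xᵢ ≤ 1}`. -/
def simplexSet (m : ℕ) : Set (Fin m → ℝ) :=
  polySet (0 : Matrix (Fin 0) (Fin m) ℝ) 0 (simplexB m) (simplexd m)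

/-- The circuits of the description `-x ≤ 0, Σᵢ xᵢ ≤ 1` of the standard simplex. -/
def simplexCircuits (m : ℕ) : Set (Fin m → ℝ) :=
  circuits (0 : Matrix (Fin 0) (Fin m) ℝ) (simplexB m)

/-!
`P_n` is an iterated pyramid over a quadrilateral, and its faces are read off the slack matrix that
pairs its facets with its vertices. The circuits of an irredundant description depend only on the
directions of the facets, so a single description of `P_n` decides the theorem. The nonzero elements
of `π(C(S_m))` are the nonzero multiples of differences of two vertices of `P_n`. Any two vertices
span an edge unless they are opposite in the quadrilateral; the diagonals of the quadrilateral are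
not circuits because each of its edge normals is nonzero on them, whereas a side is orthogonal to
one of the normals. Finally, the third unit vector is a circuit, but not a multiple of a difference
of vertices.
-/

section AffineSpan

variable {K V : Type*} [Field K] [AddCommGroup V] [Module K V]

lemma direction_affineSpan_le_iff {s : Set V} {D : Submodule K V} :
    (affineSpan K s).direction ≤ D ↔ ∀ x ∈ s, ∀ y ∈ s, x - y ∈ D := by
  rw [direction_affineSpan, vectorSpan_def, Submodule.span_le]
  exact Set.vsub_subset_iff

lemma sub_mem_direction_affineSpan {s : Set V} {x y : V} (hx : x ∈ s) (hy : y ∈ s) :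
    x - y ∈ (affineSpan K s).direction :=
  direction_affineSpan_le_iff.mp le_rfl x hx y hy

lemma direction_affineSpan_sep_le_ker (f : Module.Dual K V) (a : K) (P : Set V) :
    (affineSpan K {x ∈ P | f x = a}).direction ≤ LinearMap.ker f :=
  direction_affineSpan_le_iff.mpr fun x hx y hy => by
    rw [LinearMap.mem_ker, map_sub, hx.2, hy.2, sub_self]

lemma finrank_inf_ker_add_one {D : Submodule K V} [FiniteDimensional K D] {f : Module.Dual K V}
    (hf : ∃ x ∈ D, f x ≠ 0) :
    Module.finrank K ↥(D ⊓ LinearMap.ker f) + 1 = Module.finrank K D := by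
  obtain ⟨x, hxD, hx⟩ := hf
  have hne : f.domRestrict D ≠ 0 := fun h => hx (LinearMap.congr_fun h ⟨x, hxD⟩)
  rw [← Module.Dual.finrank_ker_add_one_of_ne_zero hne, LinearMap.ker_domRestrict,
    ← Submodule.map_comap_subtype, Submodule.finrank_map_subtype_eq]

end AffineSpan

section Faces

variable {ι : Type*} [Fintype ι] {P F : Set (ι → ℝ)} {x y : ι → ℝ}

lemma isFace_iff_of_nonempty (hF : F.Nonempty) :
    IsFace P F ↔ ∃ (c : ι → ℝ) (s : ℝ), (∀ x ∈ P, c ⬝ᵥ x ≤ s) ∧ F = {x ∈ P | c ⬝ᵥ x = s} := by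
  constructor
  · rintro (rfl | ⟨c, s, hle, -, hF⟩)
    exacts [⟨0, 0, by simp, by simp⟩, ⟨c, s, hle, hF⟩]
  · rintro ⟨c, s, hle, rfl⟩
    exact .inr ⟨c, s, hle, hF, rfl⟩

lemma IsFace.subset (hF : IsFace P F) : F ⊆ P := by
  rcases hF with rfl | ⟨c, s, -, -, rfl⟩
  exacts [subset_rfl, Set.sep_subset _ _]

lemma IsFace.convex (hF : IsFace P F) (hP : Convex ℝ P) : Convex ℝ F := by
  rcases hF with rfl | ⟨c, s, -, -, rfl⟩
  exacts [hP, hP.inter (convex_hyperplane (dotProductBilin ℝ ℝ c).isLinear s)]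

lemma IsFace.mem_of_sub_mem_direction (hF : IsFace P F) (hx : x ∈ P) (hy : y ∈ F)
    (hxy : x - y ∈ (affineSpan ℝ F).direction) : x ∈ F := by
  obtain ⟨c, s, -, rfl⟩ := (isFace_iff_of_nonempty ⟨y, hy⟩).mp hF
  have hc : c ⬝ᵥ (x - y) = 0 := direction_affineSpan_sep_le_ker (dotProductBilin ℝ ℝ c) s P hxy
  rw [dotProduct_sub, hy.2, sub_eq_zero] at hc
  exact ⟨hx, hc⟩

lemma IsFacet.ne (hF : IsFacet P F) : F ≠ P := fun h => by
  have := hF.2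
  rw [h] at this
  omega

lemma IsFacet.nonempty (hF : IsFacet P F) : F.Nonempty := by
  rcases hF.1 with h | ⟨c, s, -, ⟨y, hy, hcy⟩, rfl⟩
  exacts [absurd h hF.ne, ⟨y, hy, hcy⟩]

lemma spanDim_empty : spanDim (∅ : Set (ι → ℝ)) = 0 := by
  simp [spanDim]

lemma IsEdge.nonempty (hF : IsEdge P F) : F.Nonempty := by
  rw [Set.nonempty_iff_ne_empty]
  rintro rfl
  exact absurd hF.2 (by rw [spanDim_empty]; exact zero_ne_one)

lemma IsFacet.direction_eq_inf_ker {f : Module.Dual ℝ (ι → ℝ)} {a : ℝ} (hF : IsFacet P F)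
    (hf : ∀ x ∈ F, f x = a) (hP : ∃ x ∈ P, f x ≠ a) :
    (affineSpan ℝ F).direction = (affineSpan ℝ P).direction ⊓ LinearMap.ker f := by
  obtain ⟨y, hy⟩ := hF.nonempty
  obtain ⟨z, hz, hza⟩ := hP
  have hle : (affineSpan ℝ F).direction ≤ LinearMap.ker f := by
    nth_rw 1 [← Set.sep_eq_self_iff_mem_true.mpr hf]
    exact direction_affineSpan_sep_le_ker f a F
  have hzy : f (z - y) ≠ 0 := by rwa [map_sub, hf y hy, sub_ne_zero]
  exact Submodule.eq_of_le_of_finrank_eq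
    (le_inf (AffineSubspace.direction_le (affineSpan_mono ℝ hF.1.subset)) hle)
    (Nat.succ_injective (hF.2.trans (finrank_inf_ker_add_one
      ⟨z - y, sub_mem_direction_affineSpan hz (hF.1.subset hy), hzy⟩).symm))

lemma IsFacet.eq_sep {f : Module.Dual ℝ (ι → ℝ)} {a : ℝ} (hF : IsFacet P F)
    (hf : ∀ x ∈ F, f x = a) (hP : ∃ x ∈ P, f x ≠ a) : F = {x ∈ P | f x = a} := by
  obtain ⟨y, hy⟩ := hF.nonempty
  refine Set.Subset.antisymm (fun x hx => ⟨hF.1.subset hx, hf x hx⟩) fun x hx => ?_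
  refine hF.1.mem_of_sub_mem_direction hx.1 hy ?_
  rw [hF.direction_eq_inf_ker hf hP, Submodule.mem_inf, LinearMap.mem_ker, map_sub, hx.2,
    hf y hy, sub_self]
  exact ⟨sub_mem_direction_affineSpan hx.1 (hF.1.subset hy), rfl⟩

end Faces

section Polyhedra

variable {p q ι : Type*} [Fintype ι] {A : Matrix p ι ℝ} {b : p → ℝ} {B : Matrix q ι ℝ} {d : q → ℝ}
  {P F : Set (ι → ℝ)} {x y g : ι → ℝ}

lemma convex_polySet : Convex ℝ (polySet A b B d) :=
  ((convex_singleton b).is_linear_preimage A.mulVecLin.isLinear).inter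
    ((convex_Iic d).is_linear_preimage B.mulVecLin.isLinear)

lemma exists_mem_forall_tight [Finite q] (hF : Convex ℝ F) (hne : F.Nonempty)
    (hle : ∀ x ∈ F, B *ᵥ x ≤ d) :
    ∃ x ∈ F, ∀ i, (B *ᵥ x) i = d i → ∀ y ∈ F, (B *ᵥ y) i = d i := by
  obtain ⟨x, hx, hmin⟩ :=
    exists_minimalFor_of_wellFoundedLT (· ∈ F) (fun x => {i | (B *ᵥ x) i = d i}) hne
  refine ⟨x, hx, fun i hi y hy => ?_⟩
  have hmid : ∀ j, (B *ᵥ midpoint ℝ x y) j = ((B *ᵥ x) j + (B *ᵥ y) j) / 2 := fun j => by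
    rw [midpoint_eq_smul_add, mulVec_smul, mulVec_add, Pi.smul_apply, Pi.add_apply]
    simp only [invOf_eq_inv, smul_eq_mul]
    ring
  have htight : ∀ j, (B *ᵥ midpoint ℝ x y) j = d j → (B *ᵥ x) j = d j ∧ (B *ᵥ y) j = d j :=
    fun j hj => by
      have := hle x hx j
      have := hle y hy j
      rw [hmid] at hj
      constructor <;> linarith
  exact (htight i (hmin (hF.midpoint_mem hx hy) (fun j hj => (htight j hj).1) hi)).2

lemma exists_add_smul_mem_polySet [Finite q] (hx : x ∈ polySet A b B d) (hA : A *ᵥ y = 0)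
    (hB : ∀ i, (B *ᵥ x) i = d i → (B *ᵥ y) i ≤ 0) :
    ∃ ε : ℝ, 0 < ε ∧ x + ε • y ∈ polySet A b B d := by
  have hrow : ∀ i, ∀ᶠ ε in nhdsWithin (0 : ℝ) (Set.Ioi 0), (B *ᵥ (x + ε • y)) i ≤ d i := by
    intro i
    simp only [mulVec_add, mulVec_smul, Pi.add_apply, Pi.smul_apply, smul_eq_mul]
    by_cases hi : (B *ᵥ x) i = d i
    · filter_upwards [self_mem_nhdsWithin] with ε hε
      linarith [mul_nonpos_of_nonneg_of_nonpos (le_of_lt hε) (hB i hi)]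
    · have hcont : Continuous fun ε : ℝ => (B *ᵥ x) i + ε * (B *ᵥ y) i := by fun_prop
      have hlt := hcont.continuousAt.eventually_lt (x₀ := 0) continuousAt_const
        (by simpa using (hx.2 i).lt_of_ne hi)
      exact (hlt.filter_mono nhdsWithin_le_nhds).mono fun _ h => h.le
  obtain ⟨ε, hle, hpos⟩ := ((Filter.eventually_all.mpr hrow).and self_mem_nhdsWithin).exists
  exact ⟨ε, hpos, by rw [mulVec_add, mulVec_smul, hA, smul_zero, add_zero, hx.1], hle⟩

lemma IsFace.mem_direction_iff [Finite q] (hF : IsFace (polySet A b B d) F) (hne : F.Nonempty) :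
    y ∈ (affineSpan ℝ F).direction ↔
      A *ᵥ y = 0 ∧ ∀ i, (∀ x ∈ F, (B *ᵥ x) i = d i) → (B *ᵥ y) i = 0 := by
  constructor
  · refine fun hy => ⟨?_, fun i hi => ?_⟩
    · refine (direction_affineSpan_le_iff (D := LinearMap.ker A.mulVecLin)).mpr
        (fun u hu v hv => ?_) hy
      rw [LinearMap.mem_ker, mulVecLin_apply, mulVec_sub, (hF.subset hu).1, (hF.subset hv).1,
        sub_self]
    · rw [← Set.sep_eq_self_iff_mem_true.mpr hi] at hy
      exact direction_affineSpan_sep_le_ker (dotProductBilin ℝ ℝ (B i)) (d i) F hy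
  · rintro ⟨hA, hB⟩
    obtain ⟨x, hxF, htight⟩ :=
      exists_mem_forall_tight (hF.convex convex_polySet) hne fun x hx => (hF.subset hx).2
    obtain ⟨c, s, hle, rfl⟩ := (isFace_iff_of_nonempty hne).mp hF
    have hB' : ∀ i, (B *ᵥ x) i = d i → (B *ᵥ y) i = 0 := fun i hi => hB i (htight i hi)
    obtain ⟨ε, hε, hpos⟩ := exists_add_smul_mem_polySet hxF.1 hA fun i hi => (hB' i hi).le
    obtain ⟨δ, hδ, hneg⟩ := exists_add_smul_mem_polySet (y := -y) hxF.1
      (by rw [mulVec_neg, hA, neg_zero]) fun i hi => by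
        rw [mulVec_neg, Pi.neg_apply, hB' i hi, neg_zero]
    have hcy : c ⬝ᵥ y = 0 := by
      have h₁ := hle _ hpos
      have h₂ := hle _ hneg
      simp only [dotProduct_add, dotProduct_smul, dotProduct_neg, hxF.2, smul_eq_mul] at h₁ h₂
      refine le_antisymm ?_ ?_ <;> nlinarith
    have hmem : x + ε • y ∈ {x ∈ polySet A b B d | c ⬝ᵥ x = s} :=
      ⟨hpos, by rw [dotProduct_add, dotProduct_smul, hcy, smul_zero, add_zero, hxF.2]⟩
    have := sub_mem_direction_affineSpan (K := ℝ) hmem hxF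
    rwa [add_sub_cancel_left, Submodule.smul_mem_iff _ hε.ne'] at this

lemma IsFacet.exists_eq_tight [Finite q] (hF : IsFacet (polySet A b B d) F) :
    ∃ i, F = {x ∈ polySet A b B d | (B *ᵥ x) i = d i} := by
  obtain ⟨y, hy⟩ := hF.nonempty
  obtain ⟨i, htight, z, hz, hzi⟩ : ∃ i, (∀ x ∈ F, (B *ᵥ x) i = d i) ∧
      ∃ z ∈ polySet A b B d, (B *ᵥ z) i ≠ d i := by
    by_contra! h
    refine hF.ne (hF.1.subset.antisymm fun x hx => hF.1.mem_of_sub_mem_direction hx hy ?_)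
    have hPmem := (IsFace.mem_direction_iff (.inl rfl) ⟨y, hF.1.subset hy⟩).mp
      (sub_mem_direction_affineSpan (K := ℝ) hx (hF.1.subset hy))
    exact (hF.1.mem_direction_iff ⟨y, hy⟩).mpr ⟨hPmem.1, fun i hi => hPmem.2 i (h i hi)⟩
  exact ⟨i, hF.eq_sep (f := dotProductBilin ℝ ℝ (B i)) htight ⟨z, hz, hzi⟩⟩

end Polyhedra

section Circuits

variable {p q p' q' ι : Type*} [Fintype ι] {A : Matrix p ι ℝ} {b : p → ℝ} {B : Matrix q ι ℝ}
  {d : q → ℝ} {A' : Matrix p' ι ℝ} {b' : p' → ℝ} {B' : Matrix q' ι ℝ} {d' : q' → ℝ}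
  {P F : Set (ι → ℝ)} {x y g : ι → ℝ}

lemma mem_circuits_of_forall_eq_smul (hA : A *ᵥ g = 0) (hg : g ≠ 0)
    (h : ∀ y, A *ᵥ y = 0 → (∀ i, (B *ᵥ g) i = 0 → (B *ᵥ y) i = 0) → ∃ t : ℝ, y = t • g) :
    g ∈ circuits A B := by
  refine ⟨hA, hg, fun y hAy hy hsub i hi => ?_⟩
  obtain ⟨t, rfl⟩ := h y hAy fun i hi => by_contra fun hyi => hsub hyi hi
  have ht : t ≠ 0 := fun ht => hy (by rw [ht, zero_smul])
  rw [Set.mem_ofPred_eq, mulVec_smul, Pi.smul_apply, smul_eq_mul]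
  exact mul_ne_zero ht hi

lemma IsEdgeDirection.mem_circuits [Finite q] (hg : IsEdgeDirection (polySet A b B d) g) :
    g ∈ circuits A B := by
  obtain ⟨hg0, F, hF, hgF⟩ := hg
  have hdir : ∀ {y}, y ∈ (affineSpan ℝ F).direction ↔ _ := hF.1.mem_direction_iff hF.nonempty
  refine mem_circuits_of_forall_eq_smul (hdir.mp hgF).1 hg0 fun y hAy hy => ?_
  have hyF := hdir.mpr ⟨hAy, fun i hi => hy i ((hdir.mp hgF).2 i hi)⟩
  obtain ⟨t, ht⟩ := exists_smul_eq_of_finrank_eq_one hF.2 (x := ⟨g, hgF⟩)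
    (by simpa using hg0) ⟨y, hyF⟩
  exact ⟨t, (congrArg Subtype.val ht).symm⟩

lemma Irredundant.mem_direction_iff (h : Irredundant A b B d P) (hP : P.Nonempty) :
    y ∈ (affineSpan ℝ P).direction ↔ A *ᵥ y = 0 := by
  obtain ⟨x, hx⟩ := hP
  have hAx : A *ᵥ x = b := by
    rw [h.1] at hx
    exact hx.1
  rw [← AffineSubspace.vadd_mem_iff_mem_direction y (mem_affineSpan ℝ hx), ← SetLike.mem_coe,
    ← h.2.1, Set.mem_ofPred_eq, vadd_eq_add, mulVec_add, hAx, add_eq_right]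

lemma Irredundant.isFacet_iff [Finite q] (h : Irredundant A b B d P) :
    IsFacet P F ↔ ∃ i, F = {x ∈ P | (B *ᵥ x) i = d i} := by
  refine ⟨fun hF => ?_, ?_⟩
  · rw [h.1] at hF ⊢
    exact hF.exists_eq_tight
  · rintro ⟨i, rfl⟩
    exact h.2.2 i

lemma Irredundant.mem_direction_facet_iff (h : Irredundant A b B d P) (i : q)
    (hy : y ∈ (affineSpan ℝ P).direction) :
    y ∈ (affineSpan ℝ {x ∈ P | (B *ᵥ x) i = d i}).direction ↔ (B *ᵥ y) i = 0 := by
  have hP : ∃ x ∈ P, (B *ᵥ x) i ≠ d i := by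
    by_contra! hP
    exact (h.2.2 i).ne (Set.sep_eq_self_iff_mem_true.mpr hP)
  rw [(h.2.2 i).direction_eq_inf_ker (f := dotProductBilin ℝ ℝ (B i)) (fun x hx => hx.2) hP]
  exact and_iff_right hy

lemma Irredundant.mem_circuits_iff [Finite q] (h : Irredundant A b B d P) (hP : P.Nonempty) :
    g ∈ circuits A B ↔ g ∈ (affineSpan ℝ P).direction ∧ g ≠ 0 ∧
      ∀ y ∈ (affineSpan ℝ P).direction, y ≠ 0 →
        (∀ F, IsFacet P F → g ∈ (affineSpan ℝ F).direction → y ∈ (affineSpan ℝ F).direction) →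
        ∀ F, IsFacet P F → y ∈ (affineSpan ℝ F).direction → g ∈ (affineSpan ℝ F).direction := by
  have hsupp : ∀ {u v}, A *ᵥ u = 0 → A *ᵥ v = 0 →
      ({i | (B *ᵥ u) i ≠ 0} ⊆ {i | (B *ᵥ v) i ≠ 0} ↔ ∀ F, IsFacet P F →
        v ∈ (affineSpan ℝ F).direction → u ∈ (affineSpan ℝ F).direction) := fun hu hv => by
    simp only [h.isFacet_iff, forall_exists_index, forall_eq_apply_imp_iff,
      h.mem_direction_facet_iff _ ((h.mem_direction_iff hP).mpr hu),
      h.mem_direction_facet_iff _ ((h.mem_direction_iff hP).mpr hv)]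
    exact forall_congr' fun _ => not_imp_not
  rw [h.mem_direction_iff hP]
  refine and_congr_right fun hg => and_congr_right fun _ => forall_congr' fun y => ?_
  rw [h.mem_direction_iff hP]
  refine forall_congr' fun hy => imp_congr_right fun _ => ?_
  rw [hsupp hy hg, hsupp hg hy]

lemma Irredundant.circuits_eq [Finite q] [Finite q'] (h : Irredundant A b B d P)
    (h' : Irredundant A' b' B' d' P) (hP : P.Nonempty) : circuits A B = circuits A' B' :=
  Set.ext fun _ => (h.mem_circuits_iff hP).trans (h'.mem_circuits_iff hP).symm

lemma mem_direction_polySet_iff [Finite q] (hP : (polySet A b B d).Nonempty)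
    (hslack : ∀ i, ∃ x ∈ polySet A b B d, (B *ᵥ x) i ≠ d i) :
    y ∈ (affineSpan ℝ (polySet A b B d)).direction ↔ A *ᵥ y = 0 := by
  rw [IsFace.mem_direction_iff (.inl rfl) hP, and_iff_left]
  intro i hi
  obtain ⟨x, hx, hxi⟩ := hslack i
  exact absurd (hi x hx) hxi

lemma isFacet_tight [Finite q] {i : q} (htight : ∃ x ∈ polySet A b B d, (B *ᵥ x) i = d i)
    (hslack : ∀ j, ∃ x ∈ polySet A b B d, (B *ᵥ x) j ≠ d j)
    (hsep : ∀ j, j ≠ i → ∃ x ∈ polySet A b B d, (B *ᵥ x) i = d i ∧ (B *ᵥ x) j ≠ d j) :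
    IsFacet (polySet A b B d) {x ∈ polySet A b B d | (B *ᵥ x) i = d i} := by
  obtain ⟨x, hx, hxi⟩ := htight
  obtain ⟨z, hz, hzi⟩ := hslack i
  have hface : IsFace (polySet A b B d) {x ∈ polySet A b B d | (B *ᵥ x) i = d i} :=
    .inr ⟨B i, d i, fun y hy => hy.2 i, ⟨x, hx, hxi⟩, rfl⟩
  have hdir : (affineSpan ℝ {x ∈ polySet A b B d | (B *ᵥ x) i = d i}).direction =
      (affineSpan ℝ (polySet A b B d)).direction ⊓ LinearMap.ker (dotProductBilin ℝ ℝ (B i)) := by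
    ext y
    rw [hface.mem_direction_iff ⟨x, hx, hxi⟩, Submodule.mem_inf,
      mem_direction_polySet_iff ⟨x, hx⟩ hslack]
    refine and_congr_right fun _ => ⟨fun hy => hy i fun x hx => hx.2, fun hy j hj => ?_⟩
    obtain rfl : j = i := by
      by_contra hij
      obtain ⟨u, hu, hui, huj⟩ := hsep j hij
      exact huj (hj u ⟨hu, hui⟩)
    exact hy
  refine ⟨hface, ?_⟩
  rw [spanDim, hdir]
  refine finrank_inf_ker_add_one ⟨z - x, sub_mem_direction_affineSpan hz hx, ?_⟩
  rw [map_sub, sub_ne_zero]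
  exact fun h => hzi (h.trans hxi)

lemma irredundant_polySet [Finite q] (hP : (polySet A b B d).Nonempty)
    (htight : ∀ i, ∃ x ∈ polySet A b B d, (B *ᵥ x) i = d i)
    (hslack : ∀ i, ∃ x ∈ polySet A b B d, (B *ᵥ x) i ≠ d i)
    (hsep : ∀ i j, j ≠ i → ∃ x ∈ polySet A b B d, (B *ᵥ x) i = d i ∧ (B *ᵥ x) j ≠ d j) :
    Irredundant A b B d (polySet A b B d) := by
  refine ⟨rfl, ?_, fun i => isFacet_tight (htight i) hslack (hsep i)⟩
  obtain ⟨x, hx⟩ := hP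
  ext y
  rw [SetLike.mem_coe, ← AffineSubspace.vsub_right_mem_direction_iff_mem (mem_affineSpan ℝ hx),
    mem_direction_polySet_iff ⟨x, hx⟩ hslack, vsub_eq_sub, mulVec_sub, hx.1, sub_eq_zero,
    Set.mem_ofPred_eq]

lemma isFace_tight [Finite q] (T : Set q)
    (hT : ∃ x ∈ polySet A b B d, ∀ i ∈ T, (B *ᵥ x) i = d i) :
    IsFace (polySet A b B d) {x ∈ polySet A b B d | ∀ i ∈ T, (B *ᵥ x) i = d i} := by
  classical
  have := Fintype.ofFinite q
  have hsum : ∀ x, (∑ i with i ∈ T, B i) ⬝ᵥ x = ∑ i with i ∈ T, (B *ᵥ x) i := fun x =>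
    sum_dotProduct _ _ _
  have hle : ∀ x ∈ polySet A b B d, ∀ i ∈ ({i | i ∈ T} : Finset q), (B *ᵥ x) i ≤ d i :=
    fun x hx i _ => hx.2 i
  have heq : ∀ x ∈ polySet A b B d,
      (∑ i with i ∈ T, B i) ⬝ᵥ x = ∑ i with i ∈ T, d i ↔ ∀ i ∈ T, (B *ᵥ x) i = d i := fun x hx => by
    rw [hsum, Finset.sum_eq_sum_iff_of_le (hle x hx)]
    simp
  obtain ⟨x, hx, hxT⟩ := hT
  refine .inr ⟨∑ i with i ∈ T, B i, ∑ i with i ∈ T, d i, fun y hy => ?_,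
    ⟨x, hx, (heq x hx).mpr hxT⟩, ?_⟩
  · rw [hsum]
    exact Finset.sum_le_sum (hle y hy)
  · ext y
    exact and_congr_right fun hy => (heq y hy).symm

lemma polySet_submatrix_rows {r : Type*} (e : r ≃ q) :
    polySet A b (B.submatrix e id) (d ∘ e) = polySet A b B d := by
  ext x
  exact and_congr_right fun _ =>
    (e.surjective.forall (p := fun i => (B *ᵥ x) i ≤ d i)).symm

end Circuits

section ConvexHull

variable {p q ι : Type*} [Fintype ι] {A : Matrix p ι ℝ} {b : p → ℝ} {B : Matrix q ι ℝ} {d : q → ℝ}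
  {P F V : Set (ι → ℝ)} {u v w g : ι → ℝ}

lemma IsFace.eq_convexHull (hF : IsFace (convexHull ℝ V) F) : F = convexHull ℝ (F ∩ V) := by
  rcases hF with rfl | ⟨c, s, hle, -, rfl⟩
  · rw [Set.inter_eq_right.mpr (subset_convexHull ℝ V)]
  set G : Set (ι → ℝ) := {x ∈ convexHull ℝ V | c ⬝ᵥ x = s}
  have hG : Convex ℝ {x | c ⬝ᵥ x ≤ s ∧ (c ⬝ᵥ x = s → x ∈ convexHull ℝ (G ∩ V))} := by
    refine convex_iff_forall_pos.mpr fun x hx y hy α β hα hβ hαβ => ?_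
    have hcomb : c ⬝ᵥ (α • x + β • y) = α * (c ⬝ᵥ x) + β * (c ⬝ᵥ y) := by
      simp only [dotProduct_add, dotProduct_smul, smul_eq_mul]
    have hx' := mul_le_mul_of_nonneg_left hx.1 hα.le
    have hy' := mul_le_mul_of_nonneg_left hy.1 hβ.le
    have hs : α * s + β * s = s := by rw [← add_mul, hαβ, one_mul]
    refine ⟨by linarith, fun h => ?_⟩
    exact convex_convexHull ℝ _ (hx.2 (mul_left_cancel₀ hα.ne' (by linarith)))
      (hy.2 (mul_left_cancel₀ hβ.ne' (by linarith))) hα.le hβ.le hαβ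
  have hV : convexHull ℝ V ⊆ {x | c ⬝ᵥ x ≤ s ∧ (c ⬝ᵥ x = s → x ∈ convexHull ℝ (G ∩ V))} :=
    convexHull_min (fun x hx => ⟨hle x (subset_convexHull ℝ V hx), fun hxs =>
      subset_convexHull ℝ _ ⟨⟨subset_convexHull ℝ V hx, hxs⟩, hx⟩⟩) hG
  refine Set.Subset.antisymm (fun x hx => (hV hx.1).2 hx.2)
    (convexHull_min Set.inter_subset_left ?_)
  exact (convex_convexHull ℝ V).inter
    (convex_hyperplane (dotProductBilin ℝ ℝ c).isLinear s)

lemma IsVertex.mem (hv : IsVertex (convexHull ℝ V) v) : v ∈ V := by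
  have hne : (convexHull ℝ ({v} ∩ V)).Nonempty := hv.eq_convexHull ▸ Set.singleton_nonempty v
  obtain ⟨x, rfl, hx⟩ := convexHull_nonempty_iff.mp hne
  exact hx

lemma IsEdgeDirection.exists_eq_smul_sub (hg : IsEdgeDirection (convexHull ℝ V) g) :
    ∃ u ∈ V, ∃ w ∈ V, ∃ t : ℝ, g = t • (w - u) := by
  obtain ⟨-, F, ⟨hF, hdim⟩, hgF⟩ := hg
  rw [spanDim, hF.eq_convexHull, affineSpan_convexHull] at hdim
  rw [hF.eq_convexHull, affineSpan_convexHull] at hgF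
  obtain ⟨w, hw, u, hu, hwu⟩ : ∃ w ∈ F ∩ V, ∃ u ∈ F ∩ V, w - u ≠ 0 := by
    by_contra! h
    rw [le_bot_iff.mp (direction_affineSpan_le_iff.mpr h), finrank_bot] at hdim
    exact zero_ne_one hdim
  obtain ⟨t, ht⟩ := exists_smul_eq_of_finrank_eq_one hdim
    (x := ⟨w - u, sub_mem_direction_affineSpan hw hu⟩) (by simpa using hwu) ⟨g, hgF⟩
  exact ⟨u, hu.2, w, hw.2, t, (congrArg Subtype.val ht).symm⟩

lemma isFace_segment [Finite q] (hV : polySet A b B d = convexHull ℝ V) (hu : u ∈ V) (hw : w ∈ V)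
    (h : ∀ z ∈ V, (∀ i, (B *ᵥ u) i = d i → (B *ᵥ w) i = d i → (B *ᵥ z) i = d i) → z = u ∨ z = w) :
    IsFace (convexHull ℝ V) (segment ℝ u w) := by
  set T : Set q := {i | (B *ᵥ u) i = d i ∧ (B *ᵥ w) i = d i}
  have hF : IsFace (convexHull ℝ V) {x ∈ convexHull ℝ V | ∀ i ∈ T, (B *ᵥ x) i = d i} := by
    rw [← hV]
    exact isFace_tight T ⟨u, hV ▸ subset_convexHull ℝ V hu, fun i hi => hi.1⟩
  have hvert : {x ∈ convexHull ℝ V | ∀ i ∈ T, (B *ᵥ x) i = d i} ∩ V = {u, w} := by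
    refine Set.Subset.antisymm (fun z hz => h z hz.2 fun i hiu hiw => hz.1.2 i ⟨hiu, hiw⟩) ?_
    rintro z (rfl | rfl)
    exacts [⟨⟨subset_convexHull ℝ V hu, fun i hi => hi.1⟩, hu⟩,
      ⟨⟨subset_convexHull ℝ V hw, fun i hi => hi.2⟩, hw⟩]
  rw [← convexHull_pair, ← hvert, ← hF.eq_convexHull]
  exact hF

lemma isVertex_of_forall_tight [Finite q] (hV : polySet A b B d = convexHull ℝ V) (hv : v ∈ V)
    (h : ∀ z ∈ V, (∀ i, (B *ᵥ v) i = d i → (B *ᵥ z) i = d i) → z = v) :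
    IsVertex (convexHull ℝ V) v := by
  rw [IsVertex, ← segment_same ℝ v]
  exact isFace_segment hV hv hv fun z hz hzv => .inl (h z hz fun i hi => hzv i hi hi)

lemma isEdgeDirection_smul_sub (h : IsFace P (segment ℝ u w)) (huw : u ≠ w) {t : ℝ} (ht : t ≠ 0) :
    IsEdgeDirection P (t • (w - u)) := by
  have hsub : w - u ≠ 0 := sub_ne_zero.mpr huw.symm
  have hdir : (affineSpan ℝ (segment ℝ u w)).direction = Submodule.span ℝ {w - u} := by
    rw [direction_affineSpan, vectorSpan_segment, vsub_eq_sub]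
  refine ⟨smul_ne_zero ht hsub, _, ⟨h, ?_⟩, ?_⟩
  · rw [spanDim, hdir, finrank_span_singleton hsub]
  · rw [hdir]
    exact Submodule.smul_mem _ t (Submodule.mem_span_singleton_self _)

end ConvexHull

section Simplex

variable {m : ℕ} {x g : Fin m → ℝ} {a b : Fin (m + 1)}

@[simp] lemma simplexB_mulVec_castSucc (x : Fin m → ℝ) (i : Fin m) :
    (simplexB m *ᵥ x) i.castSucc = -x i := by
  simp [simplexB, mulVec, dotProduct, Fin.val_inj]

@[simp] lemma simplexB_mulVec_last (x : Fin m → ℝ) :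
    (simplexB m *ᵥ x) (Fin.last m) = ∑ i, x i := by
  simp [simplexB, mulVec, dotProduct]

lemma sum_simplexB_mulVec (x : Fin m → ℝ) : ∑ a, (simplexB m *ᵥ x) a = 0 := by
  rw [Fin.sum_univ_castSucc]
  simp

lemma simplexB_mulVec_injective : Function.Injective (simplexB m *ᵥ ·) := fun x y h => by
  ext i
  simpa using congrFun h i.castSucc

lemma mem_simplexSet : x ∈ simplexSet m ↔ (∀ i, 0 ≤ x i) ∧ ∑ i, x i ≤ 1 := by
  simp [simplexSet, polySet, simplexd, Pi.le_def, Fin.forall_fin_succ', zero_mulVec]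

/-- The vertices of the standard simplex: the unit vectors, followed by the origin. -/
def simplexVertex (m : ℕ) : Fin (m + 1) → Fin m → ℝ :=
  Fin.snoc (fun i => Pi.single i 1) 0

lemma simplexB_mulVec_simplexVertex (a : Fin (m + 1)) :
    simplexB m *ᵥ simplexVertex m a = Pi.single (Fin.last m) 1 - Pi.single a 1 := by
  ext c
  induction a using Fin.lastCases <;> induction c using Fin.lastCases <;>
    simp [simplexVertex, Pi.single_apply, Fin.castSucc_ne_last, (Fin.castSucc_ne_last _).symm]

lemma simplexSet_eq_convexHull (m : ℕ) :
    simplexSet m = convexHull ℝ (Set.range (simplexVertex m)) := by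
  refine Set.Subset.antisymm (fun x hx => ?_) (convexHull_min ?_ convex_polySet)
  · obtain ⟨hnonneg, hsum⟩ := mem_simplexSet.mp hx
    have hx_eq : x = ∑ a, Fin.snoc (α := fun _ => ℝ) x (1 - ∑ i, x i) a • simplexVertex m a := by
      simp only [Fin.sum_univ_castSucc, simplexVertex, Fin.snoc_castSucc, Fin.snoc_last, smul_zero,
        add_zero]
      exact pi_eq_sum_univ' x
    rw [hx_eq]
    refine (convex_convexHull ℝ _).sum_mem (fun a _ => ?_) ?_ fun a _ =>
      subset_convexHull ℝ _ (Set.mem_range_self a)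
    · induction a using Fin.lastCases <;> simp [hnonneg, hsum]
    · simp [Fin.sum_univ_castSucc]
  · rintro _ ⟨a, rfl⟩
    refine mem_simplexSet.mpr ?_
    induction a using Fin.lastCases <;> simp [simplexVertex, Pi.single_apply, apply_ite]

lemma simplexB_mulVec_simplexVertex_sub (a b : Fin (m + 1)) :
    simplexB m *ᵥ (simplexVertex m b - simplexVertex m a) = Pi.single a 1 - Pi.single b 1 := by
  rw [mulVec_sub, simplexB_mulVec_simplexVertex, simplexB_mulVec_simplexVertex,
    sub_sub_sub_cancel_left]

lemma simplexVertex_injective : Function.Injective (simplexVertex m) := fun a b h => by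
  by_contra hab
  have := congrFun (simplexB_mulVec_simplexVertex_sub a b) a
  simp [h, hab] at this

lemma eq_smul_simplexVertex_sub (hab : a ≠ b)
    (hx : ∀ c, c ≠ a → c ≠ b → (simplexB m *ᵥ x) c = 0) :
    x = (simplexB m *ᵥ x) a • (simplexVertex m b - simplexVertex m a) := by
  refine simplexB_mulVec_injective ?_
  have hsum : (simplexB m *ᵥ x) a + (simplexB m *ᵥ x) b = 0 := by
    rw [← Fintype.sum_eq_add a b hab fun c hc => hx c hc.1 hc.2, sum_simplexB_mulVec]
  ext c
  simp only [mulVec_smul, simplexB_mulVec_simplexVertex_sub]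
  rcases eq_or_ne c a with rfl | hca
  · simp [hab]
  rcases eq_or_ne c b with rfl | hcb
  · simpa [hab.symm] using eq_neg_of_add_eq_zero_right hsum
  · simp [hx c hca hcb, hca, hcb]

lemma mem_simplexCircuits :
    g ∈ simplexCircuits m ↔
      ∃ a b, a ≠ b ∧ ∃ t : ℝ, t ≠ 0 ∧ g = t • (simplexVertex m b - simplexVertex m a) := by
  constructor
  · rintro ⟨-, hg, hmin⟩
    obtain ⟨a, ha⟩ : ∃ a, (simplexB m *ᵥ g) a ≠ 0 := by
      by_contra! h
      exact hg (simplexB_mulVec_injective (funext fun a => by simpa using h a))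
    obtain ⟨b, hba, hb⟩ : ∃ b, b ≠ a ∧ (simplexB m *ᵥ g) b ≠ 0 := by
      by_contra! h
      exact ha ((Fintype.sum_eq_single a h).symm.trans (sum_simplexB_mulVec g))
    have hsub := hmin (simplexVertex m b - simplexVertex m a) (Subsingleton.elim _ _)
      (sub_ne_zero.mpr (simplexVertex_injective.ne hba)) fun c hc => by
        by_cases hca : c = a
        · rwa [hca]
        by_cases hcb : c = b
        · rwa [hcb]
        simp [simplexB_mulVec_simplexVertex_sub, hca, hcb] at hc
    refine ⟨a, b, hba.symm, _, ha, eq_smul_simplexVertex_sub hba.symm fun c hca hcb => ?_⟩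
    by_contra hc
    simpa [simplexB_mulVec_simplexVertex_sub, hca, hcb] using hsub hc
  · rintro ⟨a, b, hab, t, ht, rfl⟩
    refine mem_circuits_of_forall_eq_smul (Subsingleton.elim _ _)
      (smul_ne_zero ht (sub_ne_zero.mpr (simplexVertex_injective.ne hab.symm))) fun y _ hy =>
      ⟨(simplexB m *ᵥ y) a / t, ?_⟩
    rw [smul_smul, div_mul_cancel₀ _ ht]
    refine eq_smul_simplexVertex_sub hab fun c hca hcb => hy c ?_
    rw [mulVec_smul, simplexB_mulVec_simplexVertex_sub]
    simp [hca, hcb]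

variable {κ : Type*} (M : Matrix κ (Fin m) ℝ)

lemma range_mulVec_simplexVertex :
    Set.range (fun a => M *ᵥ simplexVertex m a) = insert 0 (Set.range M.col) := by
  have hcomp : (fun a => M *ᵥ simplexVertex m a) = Fin.snoc M.col 0 := by
    ext a : 1
    induction a using Fin.lastCases <;> simp [simplexVertex]
  rw [hcomp, Fin.range_snoc]

lemma image_mulVec_simplexSet :
    (fun x => M *ᵥ x) '' simplexSet m = convexHull ℝ (insert 0 (Set.range M.col)) := by
  rw [simplexSet_eq_convexHull, ← range_mulVec_simplexVertex, Set.range_comp' (M *ᵥ ·)]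
  exact M.mulVecLin.image_convexHull _

lemma mem_image_mulVec_simplexCircuits {h : κ → ℝ} (hh : h ≠ 0) :
    h ∈ (fun x => M *ᵥ x) '' simplexCircuits m ↔
      ∃ u ∈ insert 0 (Set.range M.col), ∃ w ∈ insert 0 (Set.range M.col), ∃ t : ℝ,
        h = t • (w - u) := by
  simp only [← range_mulVec_simplexVertex, Set.exists_range_iff, ← mulVec_sub, ← mulVec_smul]
  constructor
  · rintro ⟨_, hg, rfl⟩
    obtain ⟨a, b, -, t, -, rfl⟩ := mem_simplexCircuits.mp hg
    exact ⟨a, b, t, rfl⟩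
  · rintro ⟨a, b, t, rfl⟩
    refine ⟨_, mem_simplexCircuits.mpr ⟨a, b, ?_, t, ?_, rfl⟩, rfl⟩
    · rintro rfl
      simp at hh
    · rintro rfl
      simp at hh

end Simplex

section IncidenceCounts

variable {p q κ ι : Type*} [Fintype ι] [Finite q] {A : Matrix p ι ℝ} {b : p → ℝ}
  {B : Matrix q ι ℝ} {d : q → ℝ} {P : Set (ι → ℝ)} {v : κ → ι → ℝ}

lemma Irredundant.ncard_setOf_isFacet (h : Irredundant A b B d P)
    (hsep : ∀ i j, j ≠ i → ∃ x ∈ P, (B *ᵥ x) i = d i ∧ (B *ᵥ x) j ≠ d j) :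
    {F | IsFacet P F}.ncard = Nat.card q := by
  have hinj : Function.Injective fun i => {x ∈ P | (B *ᵥ x) i = d i} := fun i j hij => by
    by_contra hne
    obtain ⟨x, hx, hi, hj⟩ := hsep i j (Ne.symm hne)
    have hmem : x ∈ {x ∈ P | (B *ᵥ x) i = d i} := ⟨hx, hi⟩
    exact hj (hij.subset hmem).2
  have hrange : {F | IsFacet P F} = Set.range fun i => {x ∈ P | (B *ᵥ x) i = d i} :=
    Set.ext fun F => h.isFacet_iff.trans (exists_congr fun _ => eq_comm)
  rw [hrange, Set.ncard_range_of_injective hinj]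

lemma ncard_setOf_isVertex (hv : polySet A b B d = convexHull ℝ (Set.range v))
    (hsep : ∀ s l, l ≠ s → ∃ i, (B *ᵥ v s) i = d i ∧ (B *ᵥ v l) i ≠ d i) :
    {x | IsVertex (convexHull ℝ (Set.range v)) x}.ncard = Nat.card κ := by
  have hinj : Function.Injective v := fun s l hsl => by
    by_contra hne
    obtain ⟨i, hs, hl⟩ := hsep s l (Ne.symm hne)
    exact hl (hsl ▸ hs)
  have hrange : {x | IsVertex (convexHull ℝ (Set.range v)) x} = Set.range v := by
    refine Set.Subset.antisymm (fun x hx => hx.mem) ?_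
    rintro _ ⟨s, rfl⟩
    refine isVertex_of_forall_tight hv (Set.mem_range_self s) ?_
    rintro _ ⟨l, rfl⟩ hl
    by_contra hne
    obtain ⟨i, hs, hli⟩ := hsep s l fun h => hne (h ▸ rfl)
    exact hli (hl i hs)
  rw [hrange, Set.ncard_range_of_injective hinj]

end IncidenceCounts

section SlackMatrix

/-- The slack matrix of the quadrilateral with vertices `quadVertex` and edge normals `quadNormal`,
whose diagonals are the pairs `{a, a.rev}`. The entries are natural numbers, so that its incidences
can be decided. -/
def quadSlack : Fin 4 → Fin 4 → ℕ :=
  ![![2, 1, 0, 0], ![0, 0, 2, 1], ![0, 1, 0, 1], ![2, 0, 2, 0]]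

lemma quadSlack_rev_ne (r a : Fin 4) : quadSlack r a.rev ≠ quadSlack r a := by
  revert r a
  decide

lemma exists_quadSlack_col_ne_zero (c : Fin 4) : ∃ r, quadSlack r c ≠ 0 := by
  revert c
  decide

lemma exists_quadSlack_col_eq_zero_ne_zero {a b c : Fin 4} (hab : b ≠ a.rev) (hca : c ≠ a)
    (hcb : c ≠ b) : ∃ r, quadSlack r a = 0 ∧ quadSlack r b = 0 ∧ quadSlack r c ≠ 0 := by
  revert a b c
  decide

lemma exists_quadSlack_row_ne_zero (r : Fin 4) : ∃ a, quadSlack r a ≠ 0 := by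
  revert r
  decide

lemma exists_quadSlack_row_eq_zero_ne_zero {r r' : Fin 4} (h : r' ≠ r) :
    ∃ a, quadSlack r a = 0 ∧ quadSlack r' a ≠ 0 := by
  revert r r'
  decide

/-- The index set of both the vertices and the facets of the `(k + 1)`-fold pyramid over a
quadrilateral: the vertices, resp. edges, of the quadrilateral, and the apexes, resp. the facets
opposite to them. -/
abbrev PyramidIndex (k : ℕ) : Type :=
  Fin 4 ⊕ Option (Fin k)

variable {k : ℕ}

/-- The slack matrix of the `(k + 1)`-fold pyramid over a quadrilateral, with a row for each facet
and a column for each vertex. -/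
def pyramidSlack (k : ℕ) : Matrix (PyramidIndex k) (PyramidIndex k) ℕ :=
  fromBlocks (of quadSlack) 0 0 (diagonal fun _ => 2)

/-- Two vertices of the pyramid form a diagonal if they are opposite in the quadrilateral. -/
def IsDiagonal : PyramidIndex k → PyramidIndex k → Prop
  | .inl a, .inl b => b = a.rev
  | _, _ => False

lemma not_isDiagonal_self (s : PyramidIndex k) : ¬ IsDiagonal s s := by
  rcases s with a | o
  · exact (by decide : ∀ a : Fin 4, a ≠ a.rev) a
  · exact id

lemma pyramidSlack_inr_eq_zero_iff {o : Option (Fin k)} {s : PyramidIndex k} :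
    pyramidSlack k (.inr o) s = 0 ↔ s ≠ .inr o := by
  rcases s with a | o' <;> simp [pyramidSlack, diagonal_apply, eq_comm]

lemma exists_pyramidSlack_col_eq_zero_ne_zero {s t l : PyramidIndex k} (hst : ¬ IsDiagonal s t)
    (hls : l ≠ s) (hlt : l ≠ t) :
    ∃ r, pyramidSlack k r s = 0 ∧ pyramidSlack k r t = 0 ∧ pyramidSlack k r l ≠ 0 := by
  rcases l with c | o
  · rcases s with a | o <;> rcases t with b | o'
    · obtain ⟨r, ha, hb, hc⟩ := exists_quadSlack_col_eq_zero_ne_zero hst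
        (ne_of_apply_ne _ hls) (ne_of_apply_ne _ hlt)
      exact ⟨.inl r, ha, hb, hc⟩
    · obtain ⟨r, ha, -, hc⟩ := exists_quadSlack_col_eq_zero_ne_zero
        (not_isDiagonal_self (k := k) (.inl a))
        (ne_of_apply_ne _ hls) (ne_of_apply_ne _ hls)
      exact ⟨.inl r, ha, rfl, hc⟩
    · obtain ⟨r, hb, -, hc⟩ := exists_quadSlack_col_eq_zero_ne_zero
        (not_isDiagonal_self (k := k) (.inl b))
        (ne_of_apply_ne _ hlt) (ne_of_apply_ne _ hlt)
      exact ⟨.inl r, rfl, hb, hc⟩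
    · obtain ⟨r, hc⟩ := exists_quadSlack_col_ne_zero c
      exact ⟨.inl r, rfl, rfl, hc⟩
  · exact ⟨.inr o, pyramidSlack_inr_eq_zero_iff.mpr hls.symm,
      pyramidSlack_inr_eq_zero_iff.mpr hlt.symm, by simp [pyramidSlack_inr_eq_zero_iff]⟩

lemma exists_pyramidSlack_row_ne_zero (r : PyramidIndex k) : ∃ s, pyramidSlack k r s ≠ 0 := by
  rcases r with r | o
  · obtain ⟨a, ha⟩ := exists_quadSlack_row_ne_zero r
    exact ⟨.inl a, ha⟩
  · exact ⟨.inr o, by simp [pyramidSlack_inr_eq_zero_iff]⟩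

lemma exists_pyramidSlack_row_eq_zero_ne_zero {r r' : PyramidIndex k} (h : r' ≠ r) :
    ∃ s, pyramidSlack k r s = 0 ∧ pyramidSlack k r' s ≠ 0 := by
  rcases r' with r' | o
  · rcases r with r | o
    · obtain ⟨a, ha, ha'⟩ := exists_quadSlack_row_eq_zero_ne_zero (ne_of_apply_ne _ h)
      exact ⟨.inl a, ha, ha'⟩
    · obtain ⟨a, ha⟩ := exists_quadSlack_row_ne_zero r'
      exact ⟨.inl a, rfl, ha⟩
  · refine ⟨.inr o, ?_, by simp [pyramidSlack_inr_eq_zero_iff]⟩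
    rcases r with r | o'
    exacts [rfl, pyramidSlack_inr_eq_zero_iff.mpr h]

lemma eq_inr_none_of_pyramidSlack_eq_zero {s : PyramidIndex k} (h0 : pyramidSlack k (.inl 0) s = 0)
    (h1 : pyramidSlack k (.inl 1) s = 0) (h : ∀ i, pyramidSlack k (.inr (some i)) s = 0) :
    s = .inr none := by
  rcases s with a | _ | i
  · exact absurd ⟨h0, h1⟩ ((by decide : ∀ a, ¬ (quadSlack 0 a = 0 ∧ quadSlack 1 a = 0)) a)
  · rfl
  · exact absurd rfl (pyramidSlack_inr_eq_zero_iff.mp (h i))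

lemma pyramidSlack_inr_none_eq {s t : PyramidIndex k}
    (h0 : pyramidSlack k (.inl 0) s = pyramidSlack k (.inl 0) t)
    (h1 : pyramidSlack k (.inl 1) s = pyramidSlack k (.inl 1) t)
    (h : ∀ i, pyramidSlack k (.inr (some i)) s = pyramidSlack k (.inr (some i)) t) :
    pyramidSlack k (.inr none) s = pyramidSlack k (.inr none) t := by
  by_cases hs : s = .inr none
  · subst hs
    rw [eq_inr_none_of_pyramidSlack_eq_zero h0.symm h1.symm fun i => (h i).symm]
  by_cases ht : t = .inr none
  · subst ht
    rw [eq_inr_none_of_pyramidSlack_eq_zero h0 h1 h]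
  rw [pyramidSlack_inr_eq_zero_iff.mpr hs, pyramidSlack_inr_eq_zero_iff.mpr ht]

end SlackMatrix

section Pyramid

variable {k : ℕ}

lemma append_dotProduct_append {R : Type*} [NonUnitalNonAssocSemiring R] {m n : ℕ}
    (u u' : Fin m → R) (v v' : Fin n → R) :
    Fin.append u v ⬝ᵥ Fin.append u' v' = u ⬝ᵥ u' + v ⬝ᵥ v' := by
  simp [dotProduct, Fin.sum_univ_add]

/-- The vertices, as rows, of the quadrilateral in the plane `y₀ + y₁ + y₂ = 2` spanned by the
first four columns of `piMat`. -/
def quadVertex : Matrix (Fin 4) (Fin 3) ℝ :=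
  !![2, 0, 0; 1, 0, 1; 0, 2, 0; 0, 1, 1]

/-- The matrix for which `quadNormal *ᵥ y ≤ 0` describes the cone over the quadrilateral with
vertices `quadVertex`. -/
def quadNormal : Matrix (Fin 4) (Fin 3) ℝ :=
  !![-1, 0, 0; 0, -1, 0; 0, 0, -1; -1, -1, 1]

/-- The vertices of the `(k + 1)`-fold pyramid over the quadrilateral `quadVertex`, with apexes at
the origin (`none`) and at twice the last `k` unit vectors. -/
def pyramidVertex (k : ℕ) : PyramidIndex k → Fin (3 + k) → ℝ
  | .inl a => Fin.append (quadVertex a) 0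
  | .inr none => 0
  | .inr (some i) => Fin.append 0 (Pi.single i 2)

/-- The outer facet normals of the pyramid with vertices `pyramidVertex k`. -/
def pyramidNormal (k : ℕ) : Matrix (PyramidIndex k) (Fin (3 + k)) ℝ
  | .inl r => Fin.append (quadNormal r) 0
  | .inr none => Fin.append 1 1
  | .inr (some i) => Fin.append 0 (Pi.single i (-1))

/-- The right-hand side of the inequality description of the pyramid with vertices
`pyramidVertex k`. -/
def pyramidBound (k : ℕ) : PyramidIndex k → ℝ :=
  Pi.single (.inr none) 2

/-- The `(k + 1)`-fold pyramid over the quadrilateral `quadVertex`. -/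
def pyramid (k : ℕ) : Set (Fin (3 + k) → ℝ) :=
  polySet (0 : Matrix (Fin 0) (Fin (3 + k)) ℝ) 0 (pyramidNormal k) (pyramidBound k)

lemma pyramidNormal_mulVec_append (y : Fin 3 → ℝ) (z : Fin k → ℝ) (r : PyramidIndex k) :
    (pyramidNormal k *ᵥ Fin.append y z) r = match r with
      | .inl r => (quadNormal *ᵥ y) r
      | .inr none => ∑ i, y i + ∑ i, z i
      | .inr (some i) => -z i := by
  rw [mulVec]
  rcases r with r | _ | i
  · simp only [pyramidNormal, append_dotProduct_append, zero_dotProduct, add_zero]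
    rfl
  · simp [pyramidNormal, append_dotProduct_append, one_dotProduct]
  · simp [pyramidNormal, append_dotProduct_append]

lemma pyramidBound_sub_mulVec_pyramidVertex (r s : PyramidIndex k) :
    pyramidBound k r - (pyramidNormal k *ᵥ pyramidVertex k s) r = pyramidSlack k r s := by
  rcases s with a | _ | j
  · rw [pyramidVertex, pyramidNormal_mulVec_append]
    rcases r with r | _ | i
    · fin_cases a <;> fin_cases r <;>
        simp [pyramidBound, pyramidSlack, quadSlack, quadNormal, quadVertex, mulVec, dotProduct,
          Fin.sum_univ_succ]
    · fin_cases a <;> norm_num [pyramidBound, pyramidSlack, quadVertex, Fin.sum_univ_succ]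
    · simp [pyramidBound, pyramidSlack]
  · rcases r with r | _ | i <;> simp [pyramidBound, pyramidSlack, pyramidVertex]
  · rw [pyramidVertex, pyramidNormal_mulVec_append]
    rcases r with r | _ | i <;>
      simp [pyramidBound, pyramidSlack, diagonal_apply, Pi.single_apply]

lemma mulVec_pyramidVertex_eq_bound_iff {r s : PyramidIndex k} :
    (pyramidNormal k *ᵥ pyramidVertex k s) r = pyramidBound k r ↔ pyramidSlack k r s = 0 := by
  rw [eq_comm, ← sub_eq_zero, pyramidBound_sub_mulVec_pyramidVertex, Nat.cast_eq_zero]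

lemma mulVec_pyramidVertex_sub (r s t : PyramidIndex k) :
    (pyramidNormal k *ᵥ (pyramidVertex k t - pyramidVertex k s)) r =
      pyramidSlack k r s - pyramidSlack k r t := by
  rw [mulVec_sub, Pi.sub_apply, ← pyramidBound_sub_mulVec_pyramidVertex,
    ← pyramidBound_sub_mulVec_pyramidVertex]
  ring

lemma pyramidVertex_mem_pyramid (s : PyramidIndex k) : pyramidVertex k s ∈ pyramid k := by
  refine ⟨Subsingleton.elim _ _, fun r => sub_nonneg.mp ?_⟩
  rw [pyramidBound_sub_mulVec_pyramidVertex]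
  exact Nat.cast_nonneg _

lemma exists_vecMul_quadVertex_eq {y : Fin 3 → ℝ} (hy : quadNormal *ᵥ y ≤ 0) :
    ∃ w : Fin 4 → ℝ, 0 ≤ w ∧ w ᵥ* quadVertex = y ∧ 2 * ∑ a, w a = ∑ i, y i := by
  have h0 : 0 ≤ y 0 := by simpa [quadNormal, vecHead] using hy 0
  have h1 : 0 ≤ y 1 := by simpa [quadNormal, vecHead, vecTail] using hy 1
  have h2 : 0 ≤ y 2 := by simpa [quadNormal, vecHead, vecTail] using hy 2
  have h3 : -y 0 + (-y 1 + y 2) ≤ 0 := by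
    simpa [quadNormal, mulVec, dotProduct, Fin.sum_univ_succ] using hy 3
  -- The weight of the vertex `(1, 0, 1)` is taken as large as possible.
  refine ⟨![(y 0 - min (y 0) (y 2)) / 2, min (y 0) (y 2),
    (y 1 - (y 2 - min (y 0) (y 2))) / 2, y 2 - min (y 0) (y 2)], fun a => ?_, ?_, ?_⟩
  · fin_cases a <;> simp <;> grind
  · ext i
    fin_cases i <;> simp [quadVertex, vecMul, dotProduct, Fin.sum_univ_succ]
  · simp only [Fin.sum_univ_four, Fin.sum_univ_three, cons_val]
    ring

lemma pyramid_eq_convexHull (k : ℕ) :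
    pyramid k = convexHull ℝ (Set.range (pyramidVertex k)) := by
  refine Set.Subset.antisymm (fun x hx => ?_)
    (convexHull_min (Set.range_subset_iff.mpr pyramidVertex_mem_pyramid) convex_polySet)
  obtain ⟨y, z, rfl⟩ : ∃ y z, x = Fin.append y z := ⟨_, _, Fin.append_castAdd_natAdd.symm⟩
  have hle (r) := pyramidNormal_mulVec_append y z r ▸ hx.2 r
  obtain ⟨w, hw, hwy, hwsum⟩ := exists_vecMul_quadVertex_eq (y := y) fun r => hle (.inl r)
  have hz (i) : 0 ≤ z i := by simpa [pyramidBound] using hle (.inr (some i))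
  have hsum : ∑ i, y i + ∑ i, z i ≤ 2 := by simpa [pyramidBound] using hle (.inr none)
  set W : PyramidIndex k → ℝ :=
    Sum.elim w fun o => o.elim (1 - (∑ a, w a + ∑ i, z i / 2)) fun i => z i / 2 with hW
  have hW0 (s) : 0 ≤ W s := by
    rcases s with a | _ | i
    · exact hw a
    · simp only [hW, Sum.elim_inr, Option.elim_none, ← Finset.sum_div]
      linarith
    · exact div_nonneg (hz i) zero_le_two
  have hW1 : ∑ s, W s = 1 := by
    simp only [hW, Fintype.sum_sum_type, Fintype.sum_option, Sum.elim_inl, Sum.elim_inr,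
      Option.elim_none, Option.elim_some]
    ring
  have hWx : ∑ s, W s • pyramidVertex k s = Fin.append y z := by
    ext i
    refine Fin.addCases (fun i => ?_) (fun i => ?_) i
    · simp [hW, pyramidVertex, ← hwy, vecMul, dotProduct]
    · simp [hW, pyramidVertex, Pi.single_apply]
  rw [← hWx]
  exact (convex_convexHull ℝ _).sum_mem (fun s _ => hW0 s) hW1
    fun s _ => subset_convexHull ℝ _ ⟨s, rfl⟩

lemma exists_mem_pyramid_mulVec_ne (r : PyramidIndex k) :
    ∃ x ∈ pyramid k, (pyramidNormal k *ᵥ x) r ≠ pyramidBound k r := by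
  obtain ⟨s, hs⟩ := exists_pyramidSlack_row_ne_zero r
  exact ⟨_, pyramidVertex_mem_pyramid s, mulVec_pyramidVertex_eq_bound_iff.not.mpr hs⟩

lemma exists_mem_pyramid_mulVec_eq_ne {r r' : PyramidIndex k} (h : r' ≠ r) :
    ∃ x ∈ pyramid k, (pyramidNormal k *ᵥ x) r = pyramidBound k r ∧
      (pyramidNormal k *ᵥ x) r' ≠ pyramidBound k r' := by
  obtain ⟨s, hs, hs'⟩ := exists_pyramidSlack_row_eq_zero_ne_zero h
  exact ⟨_, pyramidVertex_mem_pyramid s, mulVec_pyramidVertex_eq_bound_iff.mpr hs,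
    mulVec_pyramidVertex_eq_bound_iff.not.mpr hs'⟩

lemma pyramid_nonempty (k : ℕ) : (pyramid k).Nonempty :=
  ⟨_, pyramidVertex_mem_pyramid (.inr none)⟩

lemma irredundant_pyramid (k : ℕ) :
    Irredundant (0 : Matrix (Fin 0) (Fin (3 + k)) ℝ) 0 (pyramidNormal k) (pyramidBound k)
      (pyramid k) := by
  refine irredundant_polySet (pyramid_nonempty k) (fun r => ?_) exists_mem_pyramid_mulVec_ne
    fun r r' => exists_mem_pyramid_mulVec_eq_ne
  have : Nontrivial (PyramidIndex k) := ⟨.inl 0, .inl 1, by simp⟩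
  obtain ⟨r', hr'⟩ := exists_ne r
  obtain ⟨x, hx, hxr, -⟩ := exists_mem_pyramid_mulVec_eq_ne hr'
  exact ⟨x, hx, hxr⟩

lemma spanDim_pyramid (k : ℕ) : spanDim (pyramid k) = 3 + k := by
  have htop : (affineSpan ℝ (pyramid k)).direction = ⊤ :=
    Submodule.eq_top_iff'.mpr fun y => (mem_direction_polySet_iff (pyramid_nonempty k)
      exists_mem_pyramid_mulVec_ne).mpr (Subsingleton.elim _ _)
  rw [spanDim, htop, finrank_top, Module.finrank_fin_fun]

lemma isBounded_pyramid (k : ℕ) : Bornology.IsBounded (pyramid k) := by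
  rw [pyramid_eq_convexHull, isBounded_convexHull]
  exact (Set.finite_range _).isBounded

lemma exists_pyramid_eq_polySet (k : ℕ) :
    ∃ (q : ℕ) (B : Matrix (Fin q) (Fin (3 + k)) ℝ) (d : Fin q → ℝ),
      pyramid k = polySet (0 : Matrix (Fin 0) (Fin (3 + k)) ℝ) 0 B d :=
  ⟨_, _, _, (polySet_submatrix_rows (Fintype.equivFin (PyramidIndex k)).symm).symm⟩

lemma natCard_pyramidIndex (k : ℕ) : Nat.card (PyramidIndex k) = 3 + k + 2 := by
  simp only [Nat.card_eq_fintype_card, Fintype.card_sum, Fintype.card_option, Fintype.card_fin]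
  ring

lemma ncard_setOf_isFacet_pyramid (k : ℕ) : {F | IsFacet (pyramid k) F}.ncard = 3 + k + 2 := by
  rw [← natCard_pyramidIndex]
  exact (irredundant_pyramid k).ncard_setOf_isFacet fun r r' => exists_mem_pyramid_mulVec_eq_ne

lemma ncard_setOf_isVertex_pyramid (k : ℕ) :
    {v | IsVertex (pyramid k) v}.ncard = 3 + k + 2 := by
  rw [← natCard_pyramidIndex, pyramid_eq_convexHull]
  refine ncard_setOf_isVertex (pyramid_eq_convexHull k) fun s l hls => ?_
  obtain ⟨r, hs, -, hl⟩ := exists_pyramidSlack_col_eq_zero_ne_zero (not_isDiagonal_self s) hls hls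
  exact ⟨r, mulVec_pyramidVertex_eq_bound_iff.mpr hs,
    mulVec_pyramidVertex_eq_bound_iff.not.mpr hl⟩

lemma pyramidVertex_injective (k : ℕ) : Function.Injective (pyramidVertex k) := fun s t hst => by
  by_contra hne
  obtain ⟨r, hs, -, ht⟩ := exists_pyramidSlack_col_eq_zero_ne_zero (not_isDiagonal_self s)
    (Ne.symm hne) (Ne.symm hne)
  rw [← mulVec_pyramidVertex_eq_bound_iff, hst, mulVec_pyramidVertex_eq_bound_iff] at hs
  exact ht hs

lemma isEdgeDirection_pyramid {s t : PyramidIndex k} (hst : s ≠ t) (hdiag : ¬ IsDiagonal s t)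
    {c : ℝ} (hc : c ≠ 0) :
    IsEdgeDirection (pyramid k) (c • (pyramidVertex k t - pyramidVertex k s)) := by
  rw [pyramid_eq_convexHull]
  refine isEdgeDirection_smul_sub (isFace_segment (pyramid_eq_convexHull k)
    (Set.mem_range_self s) (Set.mem_range_self t) ?_) ((pyramidVertex_injective k).ne hst) hc
  rintro _ ⟨l, rfl⟩ hl
  by_contra! hne
  obtain ⟨r, hs, ht, hrl⟩ := exists_pyramidSlack_col_eq_zero_ne_zero hdiag
    (ne_of_apply_ne _ hne.1) (ne_of_apply_ne _ hne.2)
  simp only [mulVec_pyramidVertex_eq_bound_iff] at hl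
  exact hrl (hl r hs ht)

lemma smul_diagonal_notMem_circuits {s t : PyramidIndex k} (h : IsDiagonal s t) (c : ℝ) :
    c • (pyramidVertex k t - pyramidVertex k s) ∉
      circuits (0 : Matrix (Fin 0) (Fin (3 + k)) ℝ) (pyramidNormal k) := by
  rcases s with a | _
  swap
  · exact h.elim
  rcases t with b | _
  swap
  · exact h.elim
  obtain rfl : b = a.rev := h
  rintro ⟨-, hg, hmin⟩
  have hc : c ≠ 0 := fun hc => hg (by rw [hc, zero_smul])
  -- The diagonal vanishes on no row of the quadrilateral, this side on row `1`, and both vanish on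
  -- the rows opposite to the apexes.
  set y := pyramidVertex k (.inl 1) - pyramidVertex k (.inl 0)
  have hy : y ≠ 0 := sub_ne_zero.mpr ((pyramidVertex_injective k).ne (by simp))
  have hgsupp (r : Fin 4) : (pyramidNormal k *ᵥ
      (c • (pyramidVertex k (.inl a.rev) - pyramidVertex k (.inl a)))) (.inl r) ≠ 0 := by
    rw [mulVec_smul, Pi.smul_apply, mulVec_pyramidVertex_sub]
    exact smul_ne_zero hc (sub_ne_zero.mpr (Nat.cast_injective.ne (quadSlack_rev_ne r a).symm))
  refine hmin y (Subsingleton.elim _ _) hy ?_ (hgsupp 1) ?_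
  · rintro (r | o) hr
    · exact hgsupp r
    · exact absurd (by simp [y, mulVec_pyramidVertex_sub, pyramidSlack]) hr
  · simp [y, mulVec_pyramidVertex_sub, pyramidSlack, quadSlack]

lemma circuits_pyramid_inter_eq_setOf_isEdgeDirection (k : ℕ) :
    circuits (0 : Matrix (Fin 0) (Fin (3 + k)) ℝ) (pyramidNormal k) ∩
      {g | ∃ s t, ∃ c : ℝ, g = c • (pyramidVertex k t - pyramidVertex k s)} =
        {g | IsEdgeDirection (pyramid k) g} := by
  ext g
  refine ⟨?_, fun hg => ⟨hg.mem_circuits, ?_⟩⟩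
  · rintro ⟨hg, s, t, c, rfl⟩
    have hc : c ≠ 0 := fun hc => hg.2.1 (by rw [hc, zero_smul])
    have hst : s ≠ t := fun hst => hg.2.1 (by rw [hst, sub_self, smul_zero])
    exact isEdgeDirection_pyramid hst (fun h => smul_diagonal_notMem_circuits h c hg) hc
  · rw [Set.mem_ofPred_eq, pyramid_eq_convexHull] at hg
    obtain ⟨_, ⟨s, rfl⟩, _, ⟨t, rfl⟩, c, hg⟩ := hg.exists_eq_smul_sub
    exact ⟨s, t, c, hg⟩

lemma append_single_mem_circuits_pyramid (k : ℕ) :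
    (Fin.append (Pi.single 2 1) 0 : Fin (3 + k) → ℝ) ∈
      circuits (0 : Matrix (Fin 0) (Fin (3 + k)) ℝ) (pyramidNormal k) := by
  refine mem_circuits_of_forall_eq_smul (Subsingleton.elim _ _)
    (fun h => by simpa using congrFun h (Fin.castAdd k 2)) fun x _ hx => ?_
  obtain ⟨y, z, rfl⟩ : ∃ y z, x = Fin.append y z := ⟨_, _, Fin.append_castAdd_natAdd.symm⟩
  simp only [pyramidNormal_mulVec_append] at hx
  have h0 : y 0 = 0 := by simpa [quadNormal, vecHead] using hx (.inl 0)
  have h1 : y 1 = 0 := by simpa [quadNormal, vecHead, vecTail] using hx (.inl 1)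
  have hz (i) : z i = 0 := by simpa using hx (.inr (some i))
  refine ⟨y 2, funext fun i => Fin.addCases (fun i => ?_) (fun i => ?_) i⟩
  · fin_cases i <;> simp [h0, h1]
  · simp [hz]

lemma append_single_ne_smul_sub (s t : PyramidIndex k) (c : ℝ) :
    (Fin.append (Pi.single 2 1) 0 : Fin (3 + k) → ℝ) ≠
      c • (pyramidVertex k t - pyramidVertex k s) := by
  intro h
  have hrow (r) : (pyramidNormal k *ᵥ Fin.append (Pi.single 2 1) 0) r =
      c * (pyramidSlack k r s - pyramidSlack k r t) := by
    rw [h, mulVec_smul, Pi.smul_apply, mulVec_pyramidVertex_sub, smul_eq_mul]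
  have hone : c * (pyramidSlack k (.inr none) s - pyramidSlack k (.inr none) t) = 1 := by
    simp [← hrow, pyramidNormal_mulVec_append]
  have heq {r} (hr : (pyramidNormal k *ᵥ Fin.append (Pi.single 2 1) 0) r = 0) :
      pyramidSlack k r s = pyramidSlack k r t := Nat.cast_injective <| sub_eq_zero.mp <|
    (mul_eq_zero_iff_left (left_ne_zero_of_mul_eq_one hone)).mp (hrow r ▸ hr)
  have hnone := pyramidSlack_inr_none_eq
    (heq (by simp [pyramidNormal_mulVec_append, quadNormal]))
    (heq (by simp [pyramidNormal_mulVec_append, quadNormal]))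
    fun i => heq (by simp [pyramidNormal_mulVec_append])
  simp [hnone] at hone

end Pyramid

section Projection

variable {k m : ℕ} {j : Fin m}

lemma piMat_col_of_val_eq {a : Fin 4} (h : (j : ℕ) = a) :
    (piMat (3 + k) m).col j = pyramidVertex k (.inl a) := by
  obtain ⟨j, hj⟩ := j
  obtain rfl : j = a := h
  refine funext fun l => Fin.addCases (fun l => ?_) (fun l => ?_) l
  · fin_cases a <;> fin_cases l <;>
      simp [piMat, pyramidVertex, quadVertex, -Fin.val_eq_zero_iff]
  · simp only [col_apply, piMat, of_apply, pyramidVertex, Fin.append_right, Fin.val_natAdd,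
      Pi.zero_apply]
    grind

lemma piMat_col_of_val_eq_add {i : Fin k} (h : (j : ℕ) = 4 + i) :
    (piMat (3 + k) m).col j = pyramidVertex k (.inr (some i)) := by
  refine funext fun l => Fin.addCases (fun l => ?_) (fun l => ?_) l
  · simp only [col_apply, piMat, of_apply, pyramidVertex, Fin.append_left, Fin.val_castAdd,
      Pi.zero_apply]
    grind
  · simp only [col_apply, piMat, of_apply, pyramidVertex, Fin.append_right, Fin.val_natAdd,
      Pi.single_apply]
    grind

lemma piMat_col_of_lt (h : 3 + k < j) : (piMat (3 + k) m).col j = 0 := by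
  ext i
  simp [piMat, show (j : ℕ) ≠ 0 by omega, show (j : ℕ) ≠ 1 by omega, show (j : ℕ) ≠ 2 by omega,
    show (j : ℕ) ≠ 3 by omega, show ¬ (j : ℕ) ≤ 3 + k by omega]

lemma insert_zero_range_piMat_col (hm : 3 + k < m) :
    insert 0 (Set.range (piMat (3 + k) m).col) = Set.range (pyramidVertex k) := by
  refine Set.Subset.antisymm (Set.insert_subset ⟨.inr none, rfl⟩ ?_) ?_
  · rintro _ ⟨j, rfl⟩
    obtain hj | hj | hj : (j : ℕ) < 4 ∨ (4 ≤ (j : ℕ) ∧ (j : ℕ) ≤ 3 + k) ∨ 3 + k < (j : ℕ) := by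
      omega
    · exact ⟨.inl ⟨j, hj⟩, (piMat_col_of_val_eq rfl).symm⟩
    · have hj' : (j : ℕ) = 4 + (j - 4) := (Nat.add_sub_of_le hj.1).symm
      exact ⟨.inr (some ⟨j - 4, by omega⟩), (piMat_col_of_val_eq_add hj').symm⟩
    · exact ⟨.inr none, (piMat_col_of_lt hj).symm⟩
  · rintro _ ⟨a | _ | i, rfl⟩
    · exact .inr ⟨⟨a, by omega⟩, piMat_col_of_val_eq rfl⟩
    · exact .inl rfl
    · exact .inr ⟨⟨4 + i, by omega⟩, piMat_col_of_val_eq_add rfl⟩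

lemma image_piMat_mulVec_simplexSet (hm : 3 + k < m) :
    (fun x => piMat (3 + k) m *ᵥ x) '' simplexSet m = pyramid k := by
  rw [image_mulVec_simplexSet, insert_zero_range_piMat_col hm, pyramid_eq_convexHull]

lemma mem_image_piMat_mulVec_simplexCircuits (hm : 3 + k < m) {g : Fin (3 + k) → ℝ} (hg : g ≠ 0) :
    g ∈ (fun x => piMat (3 + k) m *ᵥ x) '' simplexCircuits m ↔
      ∃ s t, ∃ c : ℝ, g = c • (pyramidVertex k t - pyramidVertex k s) := by
  simp only [mem_image_mulVec_simplexCircuits _ hg, insert_zero_range_piMat_col hm,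
    Set.exists_range_iff]

end Projection

/-- `P_n := π_{n,m}(S_m)` is a full-dimensional polytope with exactly `n+2` facets
and exactly `n+2` vertices, and for every irredundant description of `P_n`:
`C(P_n) ⊄ π(C(S_m))`, and `C(P_n) ∩ π(C(S_m))` is exactly the set of edge directions. -/
theorem stmt_7 (n m : ℕ) (hn : 3 ≤ n) (hm : n < m) :
    -- P_n is a polytope: a bounded polyhedron
    (∃ (q : ℕ) (B : Matrix (Fin q) (Fin n) ℝ) (d : Fin q → ℝ),
      (fun x => (piMat n m).mulVec x) '' simplexSet m =
        polySet (0 : Matrix (Fin 0) (Fin n) ℝ) 0 B d) ∧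
    Bornology.IsBounded ((fun x => (piMat n m).mulVec x) '' simplexSet m) ∧
    -- full-dimensional
    spanDim ((fun x => (piMat n m).mulVec x) '' simplexSet m) = n ∧
    -- exactly n+2 facets and n+2 vertices
    {F | IsFacet ((fun x => (piMat n m).mulVec x) '' simplexSet m) F}.ncard = n + 2 ∧
    {v | IsVertex ((fun x => (piMat n m).mulVec x) '' simplexSet m) v}.ncard = n + 2 ∧
    -- for every irredundant description
    (∀ (p q : ℕ) (A : Matrix (Fin p) (Fin n) ℝ) (b : Fin p → ℝ)
        (B : Matrix (Fin q) (Fin n) ℝ) (d : Fin q → ℝ),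
      Irredundant A b B d ((fun x => (piMat n m).mulVec x) '' simplexSet m) →
        ¬ (circuits A B ⊆ (fun x => (piMat n m).mulVec x) '' simplexCircuits m) ∧
        circuits A B ∩ (fun x => (piMat n m).mulVec x) '' simplexCircuits m =
          {g | IsEdgeDirection ((fun x => (piMat n m).mulVec x) '' simplexSet m) g}) := by
  obtain ⟨k, rfl⟩ := Nat.exists_eq_add_of_le hn
  rw [image_piMat_mulVec_simplexSet hm]
  refine ⟨exists_pyramid_eq_polySet k, isBounded_pyramid k, spanDim_pyramid k,
    ncard_setOf_isFacet_pyramid k, ncard_setOf_isVertex_pyramid k, fun p q A b B d h => ?_⟩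
  rw [h.circuits_eq (irredundant_pyramid k) (pyramid_nonempty k)]
  refine ⟨fun hsub => ?_, ?_⟩
  · have he := append_single_mem_circuits_pyramid k
    obtain ⟨s, t, c, hst⟩ := (mem_image_piMat_mulVec_simplexCircuits hm he.2.1).mp (hsub he)
    exact append_single_ne_smul_sub s t c hst
  · rw [← circuits_pyramid_inter_eq_setOf_isEdgeDirection]
    exact Set.ext fun g => and_congr_right fun hg =>
      mem_image_piMat_mulVec_simplexCircuits hm hg.2.1
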